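/- Let n be a squarefree positive integer all of whose prime factors are congruent to 1 modulo 8, and assume h_4(n) = 1. For each prime p dividing n, choose positive integers x_p, y_p with p = x_p² − 32·y_p², and set δ_p = 1 if x_p ≡ 3 (mod 4) and δ_p = 0 otherwise. Then Σ_{p | n} δ_p is odd if and only if h_8(n) = 0. -/

import Mathlib

open NumberField

/-!
Since `n ≡ 1 (mod 8)`, the prime `2` is ramified in `K = ℚ(√-n)` and carries a genus character `χ`,
sending the class of an ideal of norm `m` to `χ₄` of the odd part of `m`. It is nontrivial when
`n ≠ 1`, since Dirichlet's theorem and quadratic reciprocity provide a split prime `≡ 3 (mod 4)`. It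
is trivial on squares, and on classes of order two: if `J² = (α)` then, by Hilbert 90, `J` times a
principal fractional ideal has a square generated by a rational number, so it is a rational multiple
of a product of ramified primes, and these have norm `2` or a prime `≡ 1 (mod 4)`. When
`A[2] ∩ 2A` has order two, the squares and the classes of order two together generate a subgroup of
index two (since `|A| = |2A| |A[2]|`, the index of `2A + A[2]` is the order of `2A ∩ A[2]`), so this
subgroup is exactly `ker χ`.

The ramified prime `T = (2, 1 + √-n)` is not principal and satisfies `T² = (2)`. Multiplying the
representations of the primes gives `n = U² - 32V²`; with `x = U + 8V` and `z = U + 4V` this reads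
`x² + n = 2z²`, so that `T B² = (x + √-n)` for `B = (z, x + √-n)`. Hence `[T] = [B]²` is the
nontrivial element of `A[2] ∩ 2A`, and it is a fourth power if and only if `[B]` is a square times a
class of order two, that is, if and only if `χ(B) = χ₄(z) = χ₄(U) = (-1)^(∑ δ_p)` equals `1`.
-/

open scoped QuadraticAlgebra

section RingOfIntegers

theorem exists_int_eq_of_squarefree_mul_sq_eq {d : ℤ} (hd : Squarefree d) {q : ℚ} {m : ℤ}
    (h : d * q ^ 2 = m) : ∃ k : ℤ, q = k := by
  have hcleared : d * q.num ^ 2 = m * (q.den : ℤ) ^ 2 := by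
    have : (d * q.num ^ 2 : ℚ) = m * (q.den : ℚ) ^ 2 := by
      rw [← h, ← Rat.mul_den_eq_num q]; ring
    exact_mod_cast this
  have hdvd : (q.den : ℤ) * q.den ∣ d := by
    rw [← sq]
    have hcop : IsCoprime (q.den : ℤ) q.num :=
      Int.isCoprime_iff_gcd_eq_one.mpr (Nat.Coprime.symm q.reduced)
    exact hcop.pow.dvd_of_dvd_mul_right ⟨m, by rw [hcleared, mul_comm]⟩
  have hden : q.den = 1 := by simpa [Int.isUnit_iff_natAbs_eq] using hd _ hdvd
  exact ⟨q.num, (Rat.coe_int_num_of_den_eq_one hden).symm⟩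

theorem even_and_even_of_four_dvd_sq_sub_mul_sq {d a c : ℤ} (hd : Squarefree d) (hd4 : d % 4 ≠ 1)
    (h : 4 ∣ a ^ 2 - d * c ^ 2) : Even a ∧ Even c := by
  have hd0 : d % 4 ≠ 0 := fun h0 => by
    have := hd 2 (by omega)
    norm_num [Int.isUnit_iff] at this
  obtain ⟨k, hk⟩ := h
  obtain ⟨e, r, hr, rfl⟩ : ∃ e r : ℤ, (r = 2 ∨ r = 3) ∧ d = 4 * e + r :=
    ⟨d / 4, d % 4, by omega, by omega⟩
  rcases Int.even_or_odd' a with ⟨u, rfl | rfl⟩ <;> rcases Int.even_or_odd' c with ⟨v, rfl | rfl⟩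
  · simp
  all_goals exfalso; rcases hr with rfl | rfl <;> ring_nf at hk <;> omega

theorem not_isSquare_of_squarefree_of_mod_four_ne_one {d : ℤ} (hd : Squarefree d)
    (hd4 : d % 4 ≠ 1) : ¬ IsSquare d := by
  rintro ⟨r, rfl⟩
  rcases Int.isUnit_iff.mp (hd r dvd_rfl) with rfl | rfl <;> simp at hd4

theorem exists_int_coords_of_isIntegral {d : ℤ} (hd : Squarefree d) (hd4 : d % 4 ≠ 1)
    {z : QuadraticAlgebra ℚ (d : ℚ) 0} (hz : IsIntegral ℤ z) : ∃ x y : ℤ, z = ⟨x, y⟩ := by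
  have hinj : Function.Injective (algebraMap ℚ (QuadraticAlgebra ℚ (d : ℚ) 0)) :=
    QuadraticAlgebra.algebraMap_injective
  have hstar : IsIntegral ℤ (star z) := hz.map (starRingEnd _).toIntAlgHom
  obtain ⟨a, ha⟩ : ∃ a : ℤ, (a : ℚ) = 2 * z.re := by
    have := hz.add hstar
    rw [← QuadraticAlgebra.algebraMap_trace_eq_add_star, isIntegral_algebraMap_iff hinj] at this
    simpa [QuadraticAlgebra.trace_def] using IsIntegrallyClosed.isIntegral_iff.mp this
  obtain ⟨N, hN⟩ : ∃ N : ℤ, (N : ℚ) = z.re ^ 2 - d * z.im ^ 2 := by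
    have := hz.mul hstar
    rw [← QuadraticAlgebra.algebraMap_norm_eq_mul_star, isIntegral_algebraMap_iff hinj] at this
    simpa [QuadraticAlgebra.norm_def, sq, mul_assoc] using IsIntegrallyClosed.isIntegral_iff.mp this
  obtain ⟨c, hc⟩ := exists_int_eq_of_squarefree_mul_sq_eq hd (q := 2 * z.im) (m := a ^ 2 - 4 * N)
    (by push_cast; rw [ha, hN]; ring)
  have hdvd : (4 : ℤ) ∣ a ^ 2 - d * c ^ 2 := ⟨N, by
    have : ((a ^ 2 - d * c ^ 2 : ℤ) : ℚ) = (4 * N : ℤ) := by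
      push_cast; rw [ha, ← hc, hN]; ring
    exact_mod_cast this⟩
  obtain ⟨⟨x, rfl⟩, ⟨y, rfl⟩⟩ := even_and_even_of_four_dvd_sq_sub_mul_sq hd hd4 hdvd
  refine ⟨x, y, QuadraticAlgebra.ext ?_ ?_⟩ <;> push_cast at ha hc <;> simp only <;> linarith

theorem isIntegralClosure_quadraticAlgebra {d : ℤ} (hd : Squarefree d) (hd4 : d % 4 ≠ 1)
    {K : Type*} [Field K] [CharZero K] (hdeg : Module.finrank ℚ K = 2)
    [Algebra (QuadraticAlgebra ℤ d 0) K] : IsIntegralClosure (QuadraticAlgebra ℤ d 0) ℤ K := by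
  have : FiniteDimensional ℚ K := Module.finite_of_finrank_pos (by omega)
  have hns : Fact (∀ r : ℚ, r ^ 2 ≠ (d : ℚ) + 0 * r) := ⟨fun r hr =>
    not_isSquare_of_squarefree_of_mod_four_ne_one hd hd4
      (Rat.isSquare_intCast_iff.mp ⟨r, by linarith⟩)⟩
  set s : K := algebraMap (QuadraticAlgebra ℤ d 0) K ω with hsdef
  have hs : s * s = (d : ℚ) • 1 + (0 : ℚ) • s := by
    rw [hsdef, ← map_mul, QuadraticAlgebra.omega_mul_omega_eq_mk]
    have hd' : (⟨d, 0⟩ : QuadraticAlgebra ℤ d 0) = (d : QuadraticAlgebra ℤ d 0) := rfl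
    simp [hd', Algebra.smul_def]
  let φ : QuadraticAlgebra ℚ (d : ℚ) 0 →ₐ[ℚ] K := QuadraticAlgebra.lift ⟨s, hs⟩
  have hφ : ∀ z : QuadraticAlgebra ℤ d 0, algebraMap _ K z = φ ⟨z.re, z.im⟩ := fun z => by
    have hz : z = (z.re : QuadraticAlgebra ℤ d 0) + (z.im : QuadraticAlgebra ℤ d 0) * ω := by
      ext <;> simp
    calc algebraMap _ K z = (z.re : ℚ) • (1 : K) + (z.im : ℚ) • s := by
          conv_lhs => rw [hz, map_add, map_mul, map_intCast, map_intCast, ← hsdef]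
          simp [Algebra.smul_def]
      _ = φ ⟨z.re, z.im⟩ := rfl
  have hφsurj : Function.Surjective φ :=
    (LinearMap.injective_iff_surjective_of_finrank_eq_finrank (f := φ.toLinearMap)
      (by rw [QuadraticAlgebra.finrank_eq_two, hdeg])).mp φ.toRingHom.injective
  refine ⟨fun z w h => ?_, fun {x} => ⟨fun hx => ?_, ?_⟩⟩
  · rw [hφ, hφ] at h
    simpa [QuadraticAlgebra.ext_iff] using φ.toRingHom.injective h
  · obtain ⟨z, rfl⟩ := hφsurj x
    obtain ⟨x, y, rfl⟩ := exists_int_coords_of_isIntegral hd hd4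
      ((isIntegral_algHom_iff (φ.restrictScalars ℤ) φ.toRingHom.injective).mp hx)
    exact ⟨⟨x, y⟩, hφ _⟩
  · rintro ⟨y, rfl⟩
    have : Module.Finite ℤ (QuadraticAlgebra ℤ d 0) := inferInstance
    exact (Algebra.IsIntegral.isIntegral (R := ℤ) y).map
      (algebraMap (QuadraticAlgebra ℤ d 0) K).toIntAlgHom

end RingOfIntegers

section IdealNorm

theorem eq_of_le_of_absNorm_eq {S : Type*} [CommRing S] [IsDedekindDomain S] [Module.Free ℤ S]
    [Module.Finite ℤ S] {I J : Ideal S} (hle : I ≤ J) (h : Ideal.absNorm I = Ideal.absNorm J)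
    (hI : Ideal.absNorm I ≠ 0) : I = J := by
  obtain ⟨M, rfl⟩ := Ideal.dvd_iff_le.mpr hle
  have hM : Ideal.absNorm M = 1 := by
    rw [map_mul] at h hI
    exact Nat.eq_of_mul_eq_mul_left (Nat.pos_of_ne_zero (left_ne_zero_of_mul hI))
      (by rw [h, mul_one])
  rw [Ideal.absNorm_eq_one_iff.mp hM, Ideal.mul_top]

variable {d : ℤ} [IsDedekindDomain (QuadraticAlgebra ℤ d 0)]

theorem quadraticAlgebra_absNorm_span_singleton (z : QuadraticAlgebra ℤ d 0) :
    Ideal.absNorm (Ideal.span {z}) = (z.re ^ 2 - d * z.im ^ 2).natAbs := by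
  have : Algebra.norm ℤ z = QuadraticAlgebra.norm z := by
    rw [Algebra.norm_apply, ← QuadraticAlgebra.det_toLinearMap_eq_norm]
    rfl
  rw [Ideal.absNorm_span_singleton, this, QuadraticAlgebra.norm_def]
  ring_nf

theorem absNorm_span_pair_add_omega {a : ℕ} {r : ℤ} (h : (a : ℤ) ∣ r ^ 2 - d) :
    Ideal.absNorm (Ideal.span {(a : QuadraticAlgebra ℤ d 0), (r : QuadraticAlgebra ℤ d 0) + ω})
      = a := by
  have hroot : (-r : ZMod a) * -r = d • 1 + (0 : ℤ) • (-r : ZMod a) := by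
    have := (ZMod.intCast_zmod_eq_zero_iff_dvd _ a).mpr h
    push_cast at this
    simp only [zsmul_eq_mul, Int.cast_zero]
    linear_combination this
  let φ : QuadraticAlgebra ℤ d 0 →ₐ[ℤ] ZMod a := QuadraticAlgebra.lift ⟨-r, hroot⟩
  have hφ : ∀ z, φ z = ((z.re - r * z.im : ℤ) : ZMod a) := fun z => by
    simp only [QuadraticAlgebra.lift_apply_apply, zsmul_eq_mul, mul_one, smul_neg, Int.cast_sub,
      Int.cast_mul, φ]
    ring
  have hsurj : Function.Surjective φ := fun m => by
    obtain ⟨k, rfl⟩ := ZMod.intCast_surjective m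
    exact ⟨k, by simp [hφ]⟩
  have hker : RingHom.ker φ =
      Ideal.span {(a : QuadraticAlgebra ℤ d 0), (r : QuadraticAlgebra ℤ d 0) + ω} := by
    refine le_antisymm (fun z hz => ?_) (Ideal.span_le.mpr ?_)
    · rw [RingHom.mem_ker, hφ, ZMod.intCast_zmod_eq_zero_iff_dvd] at hz
      obtain ⟨k, hk⟩ := hz
      refine Ideal.mem_span_pair.mpr ⟨k, z.im, ?_⟩
      ext
      · simp only [QuadraticAlgebra.re_add, QuadraticAlgebra.re_mul, QuadraticAlgebra.re_intCast,
          Int.cast_eq, QuadraticAlgebra.re_natCast, QuadraticAlgebra.im_intCast, mul_zero,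
          QuadraticAlgebra.im_natCast, add_zero, QuadraticAlgebra.omega_re,
          QuadraticAlgebra.im_add, QuadraticAlgebra.omega_im, zero_add, mul_one]
        linarith
      · simp
    · rintro _ (rfl | rfl) <;> simp [hφ]
  rw [← hker, Ideal.absNorm_apply, Submodule.cardQuot_apply,
    Nat.card_congr (Ideal.quotientKerAlgEquivOfSurjective hsurj).toEquiv, Nat.card_zmod]

end IdealNorm

section OddPart

/-- The completely multiplicative function sending `2` to `1` and an odd prime `p` to `χ₄ p`: the
character `χ₄` of the odd part. -/
def oddPartχ₄ : ℕ →* ℤ where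
  toFun m := ZMod.χ₄ (ordCompl[2] m : ℕ)
  map_one' := by simp
  map_mul' a b := by rw [Nat.ordCompl_mul, Nat.cast_mul, map_mul]

theorem oddPartχ₄_of_odd {m : ℕ} (hm : Odd m) : oddPartχ₄ m = ZMod.χ₄ m := by
  rw [oddPartχ₄, MonoidHom.coe_mk, OneHom.coe_mk,
    Nat.factorization_eq_zero_of_not_dvd hm.not_two_dvd_nat, pow_zero, Nat.div_one]

theorem oddPartχ₄_two : oddPartχ₄ 2 = 1 := by
  rw [oddPartχ₄, MonoidHom.coe_mk, OneHom.coe_mk, Nat.prime_two.factorization_self, pow_one,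
    Nat.div_self two_pos, Nat.cast_one, map_one]

theorem oddPartχ₄_two_mul (m : ℕ) : oddPartχ₄ (2 * m) = oddPartχ₄ m := by
  rw [map_mul, oddPartχ₄_two, one_mul]

theorem oddPartχ₄_of_mod_four_eq_one {m : ℕ} (hm : m % 4 = 1) : oddPartχ₄ m = 1 := by
  rw [oddPartχ₄_of_odd (Nat.odd_iff.mpr (by omega)), ZMod.χ₄_nat_one_mod_four hm]

theorem oddPartχ₄_sq {m : ℕ} (hm : m ≠ 0) : oddPartχ₄ (m ^ 2) = 1 := by
  have hodd : Odd (ordCompl[2] m) := by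
    rw [← Nat.not_even_iff_odd, even_iff_two_dvd]
    exact Nat.not_dvd_ordCompl Nat.prime_two hm
  rw [map_pow, oddPartχ₄, MonoidHom.coe_mk, OneHom.coe_mk]
  rcases Nat.odd_mod_four_iff.mp (Nat.odd_iff.mp hodd) with h | h
  · rw [ZMod.χ₄_nat_one_mod_four h, one_pow]
  · rw [ZMod.χ₄_nat_three_mod_four h, neg_one_sq]

theorem oddPartχ₄_eq_one_of_eq_sq_add_mul_sq {n : ℕ} (hn : n % 8 = 1) {m : ℕ} (hm : m ≠ 0)
    {x y : ℤ} (h : (m : ℤ) = x ^ 2 + n * y ^ 2) : oddPartχ₄ m = 1 := by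
  induction m using Nat.strong_induction_on generalizing x y with
  | _ m ih =>
    obtain ⟨e, he⟩ : ∃ e : ℤ, (n : ℤ) = 8 * e + 1 := ⟨n / 8, by omega⟩
    rcases Int.even_or_odd' x with ⟨u, rfl | rfl⟩ <;> rcases Int.even_or_odd' y with ⟨v, rfl | rfl⟩
    · obtain ⟨k, rfl⟩ : ∃ k, m = 2 * (2 * k) := ⟨m / 4, by ring_nf at h; omega⟩
      rw [oddPartχ₄_two_mul, oddPartχ₄_two_mul]
      exact ih k (by omega) (by omega) (x := u) (y := v) (by push_cast at h; linarith)
    · exact oddPartχ₄_of_mod_four_eq_one (by rw [he] at h; ring_nf at h; omega)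
    · exact oddPartχ₄_of_mod_four_eq_one (by rw [he] at h; ring_nf at h; omega)
    · obtain ⟨k, rfl⟩ : ∃ k, m = 2 * (4 * k + 1) := by
        obtain ⟨a, ha⟩ := Int.even_mul_succ_self u
        obtain ⟨b, hb⟩ := Int.even_mul_succ_self v
        refine ⟨m / 8, ?_⟩
        have : (m : ℤ) = 2 + 8 * (a + b + e * (2 * v + 1) ^ 2) := by
          rw [h, he]; linear_combination 4 * ha + 4 * hb
        omega
      rw [oddPartχ₄_two_mul]
      exact oddPartχ₄_of_mod_four_eq_one (by omega)

theorem map_eq_one_of_forall_prime_dvd {M : Type*} [CommMonoid M] (f : ℕ →* M) {m : ℕ}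
    (hm : m ≠ 0) (h : ∀ p : ℕ, p.Prime → p ∣ m → f p = 1) : f m = 1 := by
  rw [← Nat.prod_primeFactorsList hm, map_list_prod]
  refine List.prod_eq_one fun a ha => ?_
  obtain ⟨p, hp, rfl⟩ := List.mem_map.mp ha
  exact h p (Nat.prime_of_mem_primeFactorsList hp) (Nat.dvd_of_mem_primeFactorsList hp)

theorem mod_eight_eq_one_of_forall_prime_dvd {n : ℕ} (hn : n ≠ 0)
    (h : ∀ p : ℕ, p.Prime → p ∣ n → p % 8 = 1) : n % 8 = 1 := by
  have : (n : ZMod 8) = 1 :=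
    map_eq_one_of_forall_prime_dvd (Nat.castRingHom (ZMod 8) : ℕ →* ZMod 8) hn fun p hp hpn =>
      by simpa using (ZMod.natCast_eq_natCast_iff p 1 8).mpr (h p hp hpn)
  exact (ZMod.natCast_eq_natCast_iff n 1 8).mp (by simpa using this)

end OddPart

section AuxiliaryPrime

theorem exists_natCast_jacobiSym_eq_neg_one {n : ℕ} (hn : Odd n) (hn1 : n ≠ 1)
    (hsf : Squarefree n) : ∃ a : ℕ, a.Coprime n ∧ jacobiSym a n = -1 := by
  obtain ⟨p, hp, m, rfl⟩ := Nat.exists_prime_and_dvd hn1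
  have : Fact p.Prime := ⟨hp⟩
  have hp2 : ringChar (ZMod p) ≠ 2 := by
    rw [ZMod.ringChar_zmod_n]; rintro rfl; exact Nat.not_odd_iff_even.mpr (even_two_mul m) hn
  obtain ⟨u, hu⟩ := FiniteField.exists_nonsquare hp2
  obtain ⟨a, hap, ham⟩ := Nat.chineseRemainder (Nat.coprime_of_squarefree_mul hsf) u.val 1
  have hau : ((a : ℤ) : ZMod p) = u := by
    rw [Int.cast_natCast, (ZMod.natCast_eq_natCast_iff _ _ _).mpr hap, ZMod.natCast_zmod_val]
  have hJp : jacobiSym a p = -1 := by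
    exact ZMod.nonsquare_iff_jacobiSym_eq_neg_one.mpr (hau ▸ hu)
  have hJm : jacobiSym a m = 1 := by
    rw [jacobiSym.mod_left, ← Int.natCast_mod, ham, Int.natCast_mod, ← jacobiSym.mod_left]; simp
  have hJ : jacobiSym a (p * m) = -1 := by
    rw [jacobiSym.mul_right' _ hp.ne_zero (by rintro rfl; simp at hn), hJp, hJm]; rfl
  refine ⟨a, ?_, hJ⟩
  by_contra h
  have h0 : jacobiSym a (p * m) = 0 :=
    jacobiSym.eq_zero_iff.mpr ⟨by rintro h0; simp [h0] at hn, h⟩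
  omega

theorem exists_prime_mod_four_eq_three_dvd_sq_add {n : ℕ} (hn : n % 4 = 1) (hn1 : n ≠ 1)
    (hsf : Squarefree n) :
    ∃ q : ℕ, q.Prime ∧ q % 4 = 3 ∧ ∃ r : ℤ, (q : ℤ) ∣ r ^ 2 + n := by
  have hodd : Odd n := Nat.odd_iff.mpr (by omega)
  have hcop4 : n.Coprime 4 := (Nat.coprime_two_right.mpr hodd).pow_right 2
  obtain ⟨a, han, hJa⟩ := exists_natCast_jacobiSym_eq_neg_one hodd hn1 hsf
  obtain ⟨b, hba, hb4⟩ := Nat.chineseRemainder hcop4 a 3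
  have hbcop : b.Coprime (n * 4) := Nat.Coprime.mul_right
    (hba.gcd_eq.trans han) (hb4.gcd_eq.trans (by norm_num))
  obtain ⟨q, -, hq, hqb⟩ := Nat.forall_exists_prime_gt_and_modEq 0
    (mul_ne_zero hsf.ne_zero four_ne_zero) hbcop
  have hq4 : q % 4 = 3 := (hqb.of_mul_left n).trans hb4
  have hqodd : Odd q := Nat.odd_iff.mpr (by omega)
  have hJq : jacobiSym q n = -1 := by
    rw [jacobiSym.mod_left, ← Int.natCast_mod, (hqb.of_mul_right 4).trans hba, Int.natCast_mod,
      ← jacobiSym.mod_left, hJa]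
  have hJ : jacobiSym (-n) q = 1 := by
    rw [jacobiSym.neg _ hqodd, ZMod.χ₄_nat_three_mod_four hq4,
      jacobiSym.quadratic_reciprocity_one_mod_four hn hqodd, hJq]; rfl
  have : Fact q.Prime := ⟨hq⟩
  obtain ⟨r, hr⟩ := ZMod.isSquare_of_jacobiSym_eq_one hJ
  refine ⟨q, hq, hq4, r.val, (ZMod.intCast_zmod_eq_zero_iff_dvd _ q).mp ?_⟩
  push_cast at hr ⊢
  rw [ZMod.natCast_zmod_val, sq, ← hr, neg_add_cancel]

end AuxiliaryPrime

/-- The order `ℤ[√-n]`, with `ω` in the role of `√-n`. -/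
abbrev SqrtNegOrder (n : ℕ) : Type := QuadraticAlgebra ℤ (-(n : ℤ)) 0

section ClassGroupLift
open scoped nonZeroDivisors

variable {R M : Type*} [CommRing R] [IsDedekindDomain R] [CommMonoid M]

/-- The homomorphism on the class group induced by a homomorphism on nonzero integral ideals that is
trivial on principal ideals. -/
noncomputable def classGroupLift (f : (Ideal R)⁰ →* M)
    (hf : ∀ I : (Ideal R)⁰, (I : Ideal R).IsPrincipal → f I = 1) : ClassGroup R →* M :=
  ((Con.ker ClassGroup.mk0).lift f fun {I J} hIJ => by
    obtain ⟨x, y, hx, hy, h⟩ := ClassGroup.mk0_eq_mk0_iff.mp hIJ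
    let principal {z : R} (hz : z ≠ 0) : (Ideal R)⁰ :=
      ⟨Ideal.span {z}, mem_nonZeroDivisors_of_ne_zero (by simpa using hz)⟩
    have hprod : principal hx * I = principal hy * J := Subtype.ext h
    simpa [hf (principal hx) ⟨x, rfl⟩, hf (principal hy) ⟨y, rfl⟩] using congrArg f hprod).comp
  (Con.quotientKerEquivOfSurjective ClassGroup.mk0 ClassGroup.mk0_surjective).symm.toMonoidHom

theorem classGroupLift_mk0 (f : (Ideal R)⁰ →* M)
    (hf : ∀ I : (Ideal R)⁰, (I : Ideal R).IsPrincipal → f I = 1) (I : (Ideal R)⁰) :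
    classGroupLift f hf (ClassGroup.mk0 I) = f I := by
  have : (Con.quotientKerEquivOfSurjective ClassGroup.mk0 ClassGroup.mk0_surjective).symm
      (ClassGroup.mk0 I) = Con.mk' (Con.ker ClassGroup.mk0) I :=
    (MulEquiv.symm_apply_eq _).mpr rfl
  simp [classGroupLift, this]

end ClassGroupLift

section Ramification

variable {n : ℕ}

theorem natCast_dvd_iff {q : ℕ} {z : SqrtNegOrder n} :
    (q : SqrtNegOrder n) ∣ z ↔ (q : ℤ) ∣ z.re ∧ (q : ℤ) ∣ z.im :=
  QuadraticAlgebra.algebraMap_dvd_iff (r := (q : ℤ))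

theorem natCast_dvd_of_dvd_sq {q : ℕ} (hq : q.Prime) (hq2 : q ≠ 2) (hqn : ¬ q ∣ n)
    {z : SqrtNegOrder n} (h : (q : SqrtNegOrder n) ∣ z ^ 2) : (q : SqrtNegOrder n) ∣ z := by
  have hp : Prime (q : ℤ) := Nat.prime_iff_prime_int.mp hq
  have hz : z ^ 2 = ⟨z.re ^ 2 - n * z.im ^ 2, 2 * (z.re * z.im)⟩ := by
    ext <;> simp only [sq, QuadraticAlgebra.re_mul, QuadraticAlgebra.im_mul] <;> ring
  rw [hz, natCast_dvd_iff] at h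
  obtain ⟨hre, him⟩ := h
  have hq2' : ¬ (q : ℤ) ∣ 2 := by
    exact_mod_cast fun h2 => hq2 ((Nat.prime_dvd_prime_iff_eq hq Nat.prime_two).mp h2)
  have hqn' : ¬ (q : ℤ) ∣ n := by exact_mod_cast hqn
  rw [natCast_dvd_iff]
  rcases hp.dvd_or_dvd ((hp.dvd_or_dvd him).resolve_left hq2') with hx | hy
  · have := (dvd_sub_right (dvd_pow hx two_ne_zero)).mp hre
    exact ⟨hx, hp.dvd_of_dvd_pow ((hp.dvd_or_dvd this).resolve_left hqn')⟩
  · have := (dvd_sub_left ((dvd_pow hy two_ne_zero).mul_left (n : ℤ))).mp hre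
    exact ⟨hp.dvd_of_dvd_pow this, hy⟩

variable [IsDedekindDomain (SqrtNegOrder n)]

theorem eq_two_or_dvd_of_sq_eq_span {m : ℕ} (hm : Squarefree m) {I : Ideal (SqrtNegOrder n)}
    (hI : I ^ 2 = Ideal.span {(m : SqrtNegOrder n)}) {q : ℕ} (hq : q.Prime) (hqm : q ∣ m) :
    q = 2 ∨ q ∣ n := by
  by_contra! hram
  have hle : I ≤ Ideal.span {(q : SqrtNegOrder n)} := fun a ha => by
    have hmem : a ^ 2 ∈ Ideal.span {(m : SqrtNegOrder n)} := hI ▸ Ideal.pow_mem_pow ha 2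
    exact Ideal.mem_span_singleton.mpr <| natCast_dvd_of_dvd_sq hq hram.1 hram.2 <|
      (Nat.cast_dvd_cast hqm).trans (Ideal.mem_span_singleton.mp hmem)
  have hsq : (q ^ 2 : ℕ) ∣ m := by
    have := pow_dvd_pow_of_dvd (Ideal.dvd_iff_le.mpr hle) 2
    rw [hI, Ideal.span_singleton_pow, Ideal.dvd_iff_le, Ideal.span_singleton_le_span_singleton,
      ← Nat.cast_pow, natCast_dvd_iff] at this
    exact_mod_cast this.1
  exact hq.not_isUnit (hm q (sq q ▸ hsq))

theorem oddPartχ₄_eq_one_of_sq_eq_span (hpn : ∀ p : ℕ, p.Prime → p ∣ n → p % 4 = 1) {m : ℕ}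
    (hm : m ≠ 0) {I : Ideal (SqrtNegOrder n)}
    (hI : I ^ 2 = Ideal.span {(m : SqrtNegOrder n)}) : oddPartχ₄ m = 1 := by
  obtain ⟨m₀, k, rfl, hm₀⟩ := Nat.sq_mul_squarefree m
  have hk : k ≠ 0 := by rintro rfl; simp at hm
  have hI' :
      I ^ 2 = Ideal.span {(k : SqrtNegOrder n)} ^ 2 * Ideal.span {(m₀ : SqrtNegOrder n)} := by
    rw [hI, Ideal.span_singleton_pow, Ideal.span_singleton_mul_span_singleton]; push_cast; rfl
  obtain ⟨I₀, rfl⟩ : Ideal.span {(k : SqrtNegOrder n)} ∣ I :=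
    (UniqueFactorizationMonoid.pow_dvd_pow_iff_dvd two_ne_zero).mp ⟨_, hI'⟩
  have hI₀ : I₀ ^ 2 = Ideal.span {(m₀ : SqrtNegOrder n)} := by
    rw [mul_pow] at hI'
    exact mul_left_cancel₀ (pow_ne_zero 2 (by simpa using hk)) hI'
  rw [map_mul, oddPartχ₄_sq hk, one_mul]
  refine map_eq_one_of_forall_prime_dvd _ hm₀.ne_zero fun q hq hqm => ?_
  rcases eq_two_or_dvd_of_sq_eq_span hm₀ hI₀ hq hqm with rfl | hqn
  · exact oddPartχ₄_two
  · exact oddPartχ₄_of_mod_four_eq_one (hpn q hq hqn)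

end Ramification

section GenusCharacter
open scoped nonZeroDivisors

variable {n : ℕ} [IsDedekindDomain (SqrtNegOrder n)]

theorem absNorm_span_singleton_eq (z : SqrtNegOrder n) :
    (Ideal.absNorm (Ideal.span {z}) : ℤ) = z.re ^ 2 + n * z.im ^ 2 := by
  rw [quadraticAlgebra_absNorm_span_singleton, neg_mul, sub_neg_eq_add,
    Int.natAbs_of_nonneg (by positivity)]

theorem oddPartχ₄_absNorm_of_isPrincipal (hn : n % 8 = 1) {I : Ideal (SqrtNegOrder n)}
    (hI : I.IsPrincipal) (h0 : Ideal.absNorm I ≠ 0) : oddPartχ₄ (Ideal.absNorm I) = 1 := by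
  obtain ⟨z, rfl⟩ := hI
  exact oddPartχ₄_eq_one_of_eq_sq_add_mul_sq hn h0 (absNorm_span_singleton_eq z)

/-- The genus character attached to the prime `2`: an ideal of norm `m` is sent to `χ₄` of the odd
part of `m`. It takes only the values `1` and `-1`; the codomain `ℤ` avoids coercions from `ℤˣ`. -/
noncomputable def genusCharacter (hn : n % 8 = 1) : ClassGroup (SqrtNegOrder n) →* ℤ :=
  classGroupLift
    ((oddPartχ₄.comp (Ideal.absNorm : Ideal (SqrtNegOrder n) →*₀ ℕ).toMonoidHom).comp
      (Ideal (SqrtNegOrder n))⁰.subtype)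
    fun I hI =>
      oddPartχ₄_absNorm_of_isPrincipal hn hI (Ideal.absNorm_ne_zero_of_nonZeroDivisors I)

theorem genusCharacter_mk0 (hn : n % 8 = 1) (I : (Ideal (SqrtNegOrder n))⁰) :
    genusCharacter hn (ClassGroup.mk0 I) = oddPartχ₄ (Ideal.absNorm (I : Ideal (SqrtNegOrder n))) :=
  classGroupLift_mk0 _ _ I

theorem mem_nonZeroDivisors_of_absNorm_eq {I : Ideal (SqrtNegOrder n)} {m : ℕ}
    (h : Ideal.absNorm I = m) (hm : m ≠ 0) : I ∈ (Ideal (SqrtNegOrder n))⁰ :=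
  Ideal.absNorm_ne_zero_iff_mem_nonZeroDivisors.mp (h ▸ hm)

theorem exists_genusCharacter_eq_neg_one (hn : n % 8 = 1) (hn1 : n ≠ 1) (hsf : Squarefree n) :
    ∃ c, genusCharacter hn c = -1 := by
  obtain ⟨q, hq, hq4, r, hr⟩ := exists_prime_mod_four_eq_three_dvd_sq_add (by omega) hn1 hsf
  have hnorm := absNorm_span_pair_add_omega (d := -n) (r := r) (a := q) (by simpa using hr)
  refine ⟨ClassGroup.mk0 ⟨_, mem_nonZeroDivisors_of_absNorm_eq hnorm hq.ne_zero⟩, ?_⟩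
  rw [genusCharacter_mk0, hnorm, oddPartχ₄_of_odd (Nat.odd_iff.mpr (by omega)),
    ZMod.χ₄_nat_three_mod_four hq4]

/-- Hilbert 90 made explicit: the norm of `α` is the square of `N J`, so `α + N J` squares to `α` up
to a rational factor. -/
theorem add_absNorm_sq {J : Ideal (SqrtNegOrder n)} {α : SqrtNegOrder n}
    (hJ : J ^ 2 = Ideal.span {α}) :
    (α + Ideal.absNorm J) ^ 2 =
      α * ((2 * (α.re + Ideal.absNorm J) : ℤ) : SqrtNegOrder n) := by
  have hnorm : (Ideal.absNorm J : ℤ) ^ 2 = α.re ^ 2 + n * α.im ^ 2 := by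
    rw [← absNorm_span_singleton_eq, ← hJ, map_pow, Nat.cast_pow]
  ext
  · simp only [sq, QuadraticAlgebra.re_mul, QuadraticAlgebra.re_add, QuadraticAlgebra.re_natCast,
      QuadraticAlgebra.im_add, QuadraticAlgebra.im_natCast, QuadraticAlgebra.re_intCast,
      QuadraticAlgebra.im_intCast, Int.cast_eq] at hnorm ⊢
    linear_combination hnorm
  · simp only [sq, QuadraticAlgebra.im_mul, QuadraticAlgebra.re_add, QuadraticAlgebra.re_natCast,
      QuadraticAlgebra.im_add, QuadraticAlgebra.im_natCast, QuadraticAlgebra.re_intCast,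
      QuadraticAlgebra.im_intCast, Int.cast_eq]
    ring

theorem exists_mul_isPrincipal_and_sq_eq_span {J : Ideal (SqrtNegOrder n)} (hJ0 : J ≠ ⊥)
    (hJ : (J ^ 2).IsPrincipal) : ∃ (I : Ideal (SqrtNegOrder n)) (m : ℕ),
      m ≠ 0 ∧ (J * I).IsPrincipal ∧ I ^ 2 = Ideal.span {(m : SqrtNegOrder n)} := by
  obtain ⟨α, hα, hre⟩ : ∃ α : SqrtNegOrder n, J ^ 2 = Ideal.span {α} ∧ 0 ≤ α.re := by
    obtain ⟨α, hα⟩ := hJ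
    rcases le_total 0 α.re with h | h
    · exact ⟨α, hα, h⟩
    · exact ⟨-α, hα.trans (Ideal.span_singleton_neg α).symm, by simpa using h⟩
  obtain ⟨a, ha⟩ := Int.eq_ofNat_of_zero_le hre
  have hC : Ideal.absNorm J ≠ 0 := by simpa [Ideal.absNorm_eq_zero_iff] using hJ0
  set m := 2 * (a + Ideal.absNorm J) with hm
  have hγ : Ideal.span {α + (Ideal.absNorm J : SqrtNegOrder n)} ^ 2 =
      J ^ 2 * Ideal.span {(m : SqrtNegOrder n)} := by
    rw [hα, Ideal.span_singleton_pow, Ideal.span_singleton_mul_span_singleton, add_absNorm_sq hα,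
      ha]
    push_cast [hm]; rfl
  obtain ⟨I, hI⟩ : J ∣ Ideal.span {α + (Ideal.absNorm J : SqrtNegOrder n)} :=
    (UniqueFactorizationMonoid.pow_dvd_pow_iff_dvd two_ne_zero).mp ⟨_, hγ⟩
  refine ⟨I, m, by omega, ⟨_, hI.symm⟩, ?_⟩
  rw [hI, mul_pow] at hγ
  exact mul_left_cancel₀ (pow_ne_zero 2 hJ0) hγ

theorem genusCharacter_eq_one_of_sq_eq_one (hn : n % 8 = 1)
    (hpn : ∀ p : ℕ, p.Prime → p ∣ n → p % 4 = 1) {c : ClassGroup (SqrtNegOrder n)}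
    (hc : c ^ 2 = 1) : genusCharacter hn c = 1 := by
  obtain ⟨J, rfl⟩ := ClassGroup.mk0_surjective c
  have hJ0 : (J : Ideal (SqrtNegOrder n)) ≠ ⊥ := nonZeroDivisors.ne_zero J.2
  rw [← map_pow, ClassGroup.mk0_eq_one_iff] at hc
  obtain ⟨I, m, hm, hJI, hI⟩ := exists_mul_isPrincipal_and_sq_eq_span hJ0 hc
  have hIm : Ideal.absNorm I = m := by
    have : Ideal.absNorm I ^ 2 = m ^ 2 := by
      rw [← map_pow, hI, Ideal.absNorm_span_natCast, QuadraticAlgebra.finrank_eq_two]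
    exact Nat.pow_left_injective two_ne_zero this
  have hJI1 := oddPartχ₄_absNorm_of_isPrincipal hn hJI (by
    rw [map_mul, hIm]; exact mul_ne_zero (Ideal.absNorm_ne_zero_of_nonZeroDivisors J) hm)
  rwa [map_mul, map_mul, hIm, oddPartχ₄_eq_one_of_sq_eq_span hpn hm hI, mul_one,
    ← genusCharacter_mk0 hn] at hJI1

end GenusCharacter

section TwoIdeal
open scoped nonZeroDivisors

/-- The ideal `(a, r + √-n)` of `ℤ[√-n]`, which has norm `a` whenever `a` divides `r ^ 2 + n`. -/
def pairIdeal (n a : ℕ) (r : ℤ) : Ideal (SqrtNegOrder n) :=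
  Ideal.span {(a : SqrtNegOrder n), (r : SqrtNegOrder n) + ω}

variable {n : ℕ}

theorem omega_mul_omega_eq_neg_natCast : (ω * ω : SqrtNegOrder n) = -n := by
  ext <;> simp

theorem pairIdeal_two_one_sq_le (hn : n % 4 = 1) :
    pairIdeal n 2 1 ^ 2 ≤ Ideal.span {((2 : ℕ) : SqrtNegOrder n)} := by
  obtain ⟨e, rfl⟩ : ∃ e, n = 2 * e + 1 := ⟨n / 2, by omega⟩
  have hω := omega_mul_omega_eq_neg_natCast (n := 2 * e + 1)
  rw [pairIdeal, sq, Ideal.span_pair_mul_span_pair, Ideal.span_le]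
  push_cast at hω ⊢
  rintro _ (rfl | rfl | rfl | rfl) <;> rw [SetLike.mem_coe, Ideal.mem_span_singleton]
  · exact dvd_mul_right _ _
  · exact dvd_mul_right _ _
  · exact dvd_mul_left _ _
  · exact ⟨(ω : SqrtNegOrder (2 * e + 1)) - e, by linear_combination hω⟩

theorem pairIdeal_sq_le (z : ℕ) (x : ℤ) :
    pairIdeal n z x ^ 2 ≤
      Ideal.span {(z : SqrtNegOrder n) ^ 2, (x : SqrtNegOrder n) + (ω : SqrtNegOrder n)} := by
  rw [pairIdeal, sq, Ideal.span_pair_mul_span_pair, Ideal.span_le]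
  rintro _ (rfl | rfl | rfl | rfl) <;> rw [SetLike.mem_coe, Ideal.mem_span_pair]
  · exact ⟨1, 0, by ring⟩
  · exact ⟨0, z, by ring⟩
  · exact ⟨0, z, by ring⟩
  · exact ⟨0, (x : SqrtNegOrder n) + (ω : SqrtNegOrder n), by ring⟩

theorem pairIdeal_two_one_mul_sq_le {z : ℕ} {x : ℤ} (hx : Odd x)
    (hxz : x ^ 2 + n = 2 * (z : ℤ) ^ 2) :
    pairIdeal n 2 1 * pairIdeal n z x ^ 2 ≤
      Ideal.span {(x : SqrtNegOrder n) + (ω : SqrtNegOrder n)} := by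
  have hω := omega_mul_omega_eq_neg_natCast (n := n)
  have hxz' := congrArg (Int.cast : ℤ → SqrtNegOrder n) hxz
  obtain ⟨k, rfl⟩ := hx
  refine (mul_le_mul_right (pairIdeal_sq_le z _) _).trans ?_
  rw [pairIdeal, Ideal.span_pair_mul_span_pair, Ideal.span_le]
  push_cast at hxz' ⊢
  rintro _ (rfl | rfl | rfl | rfl) <;> rw [SetLike.mem_coe, Ideal.mem_span_singleton]
  · exact ⟨2 * k + 1 - (ω : SqrtNegOrder n), by linear_combination -hxz' + hω⟩
  · exact dvd_mul_left _ _
  · exact ⟨(z : SqrtNegOrder n) ^ 2 - k * (2 * k + 1 - (ω : SqrtNegOrder n)),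
      by linear_combination k * (hxz' - hω)⟩
  · exact dvd_mul_left _ _

variable [IsDedekindDomain (SqrtNegOrder n)]

theorem absNorm_pairIdeal {a : ℕ} {r : ℤ} (h : (a : ℤ) ∣ r ^ 2 + n) :
    Ideal.absNorm (pairIdeal n a r) = a :=
  absNorm_span_pair_add_omega (by simpa using h)

theorem absNorm_pairIdeal_two_one (hn : n % 4 = 1) : Ideal.absNorm (pairIdeal n 2 1) = 2 :=
  absNorm_pairIdeal (by push_cast; omega)

theorem pairIdeal_two_one_sq (hn : n % 4 = 1) :
    pairIdeal n 2 1 ^ 2 = Ideal.span {((2 : ℕ) : SqrtNegOrder n)} := by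
  have hnorm : Ideal.absNorm (pairIdeal n 2 1 ^ 2) = 2 ^ 2 := by
    rw [map_pow, absNorm_pairIdeal_two_one hn]
  refine eq_of_le_of_absNorm_eq (pairIdeal_two_one_sq_le hn) ?_ (by simp [hnorm])
  rw [hnorm, Ideal.absNorm_span_natCast, QuadraticAlgebra.finrank_eq_two]

theorem pairIdeal_two_one_mul_sq (hn : n % 4 = 1) {z : ℕ} (hz : z ≠ 0) {x : ℤ} (hx : Odd x)
    (hxz : x ^ 2 + n = 2 * (z : ℤ) ^ 2) :
    pairIdeal n 2 1 * pairIdeal n z x ^ 2 =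
      Ideal.span {(x : SqrtNegOrder n) + (ω : SqrtNegOrder n)} := by
  have hdvd : (z : ℤ) ∣ x ^ 2 + n := ⟨2 * z, by rw [hxz]; ring⟩
  have hnorm : Ideal.absNorm (pairIdeal n 2 1 * pairIdeal n z x ^ 2) = 2 * z ^ 2 := by
    rw [map_mul, map_pow, absNorm_pairIdeal_two_one hn, absNorm_pairIdeal hdvd]
  refine eq_of_le_of_absNorm_eq (pairIdeal_two_one_mul_sq_le hx hxz) ?_ (by simp [hnorm, hz])
  rw [hnorm, ← Nat.cast_inj (R := ℤ), absNorm_span_singleton_eq]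
  simpa using hxz.symm

theorem not_isPrincipal_pairIdeal_two_one (hn : n % 4 = 1) (hn1 : n ≠ 1) :
    ¬ (pairIdeal n 2 1).IsPrincipal := by
  rintro ⟨α, hα⟩
  have hnorm : (2 : ℤ) = α.re ^ 2 + n * α.im ^ 2 := by
    rw [← absNorm_span_singleton_eq, Ideal.span, ← hα, absNorm_pairIdeal_two_one hn]; rfl
  have him : α.im = 0 := by
    by_contra him
    have : 0 < α.im ^ 2 := by positivity
    nlinarith [sq_nonneg α.re, show (4 : ℤ) < n by omega]
  have hre : IsSquare (2 : ℤ) := ⟨α.re, by rw [hnorm, him]; ring⟩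
  exact (Int.prime_two.irreducible).not_isSquare hre

end TwoIdeal

section FiniteGroup

theorem index_range_sup_ker {G : Type*} [Group G] [Finite G] (f : G →* G) :
    (f.range ⊔ f.ker).index = Nat.card (f.ker ⊓ f.range : Subgroup G) := by
  have hsup : Nat.card f.ker * f.ker.relIndex f.range =
      Nat.card (f.range ⊔ f.ker : Subgroup G) := by
    rw [← Subgroup.relIndex_sup_right, ← Subgroup.relIndex_bot_left,
      ← Subgroup.relIndex_bot_left, Subgroup.relIndex_mul_relIndex _ _ _ bot_le le_sup_right]
  have hinf : Nat.card (f.ker ⊓ f.range : Subgroup G) * f.ker.relIndex f.range =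
      Nat.card f.range := by
    rw [← Subgroup.inf_relIndex_right, ← Subgroup.relIndex_bot_left,
      ← Subgroup.relIndex_bot_left, Subgroup.relIndex_mul_relIndex _ _ _ bot_le inf_le_right]
  refine Nat.eq_of_mul_eq_mul_left (Nat.card_pos (α := (f.range ⊔ f.ker : Subgroup G))) ?_
  rw [Subgroup.card_mul_index, ← hsup, mul_right_comm, mul_assoc, hinf, ← Subgroup.index_ker,
    Subgroup.card_mul_index]

variable {G : Type*} [CommGroup G]

theorem index_range_sup_ker_powMonoidHom [Finite G] (k : ℕ) :
    ((powMonoidHom k : G →* G).range ⊔ (powMonoidHom k).ker).index =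
      Nat.card {c : G // c ^ k = 1 ∧ ∃ b, c = b ^ k} := by
  rw [index_range_sup_ker]
  refine Nat.card_congr (Equiv.subtypeEquivRight fun c => ?_)
  simp [Subgroup.mem_inf, MonoidHom.mem_ker, MonoidHom.mem_range, eq_comm]

theorem mem_range_sup_ker_powMonoidHom_two_iff {b : G} :
    b ∈ (powMonoidHom 2 : G →* G).range ⊔ (powMonoidHom 2).ker ↔ ∃ e, b ^ 2 = e ^ 4 := by
  rw [Subgroup.mem_sup]
  constructor
  · rintro ⟨_, ⟨e, rfl⟩, g, hg, rfl⟩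
    rw [MonoidHom.mem_ker, powMonoidHom_apply] at hg
    exact ⟨e, by rw [powMonoidHom_apply, mul_pow, hg, mul_one, ← pow_mul]⟩
  · rintro ⟨e, he⟩
    refine ⟨e ^ 2, ⟨e, rfl⟩, (e ^ 2)⁻¹ * b, ?_, mul_inv_cancel_left _ _⟩
    rw [MonoidHom.mem_ker, powMonoidHom_apply, mul_pow, he, inv_pow, ← pow_mul, inv_mul_cancel]

theorem ker_eq_range_sup_ker_powMonoidHom_two [Finite G] {M : Type*} [MulOneClass M] {χ : G →* M}
    (h4 : Nat.card {c : G // c ^ 2 = 1 ∧ ∃ b, c = b ^ 2} = 2) (hχ : ∃ c, χ c ≠ 1)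
    (hχsq : ∀ c, χ (c ^ 2) = 1) (hχtors : ∀ c, c ^ 2 = 1 → χ c = 1) :
    χ.ker = (powMonoidHom 2).range ⊔ (powMonoidHom 2).ker := by
  have hle : (powMonoidHom 2).range ⊔ (powMonoidHom 2).ker ≤ χ.ker :=
    sup_le (by rintro _ ⟨c, rfl⟩; exact hχsq c) hχtors
  obtain ⟨c, hc⟩ := hχ
  have hker : χ.ker.index ≠ 1 := fun h =>
    hc ((Subgroup.index_eq_one.mp h).ge (Subgroup.mem_top c))
  refine (hle.eq_of_not_lt fun hlt => ?_).symm
  have := Subgroup.index_strictAnti hlt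
  rw [index_range_sup_ker_powMonoidHom, h4] at this
  have := χ.ker.index_ne_zero_of_finite
  omega

theorem card_sq_eq_one_and_fourth_power_eq_one_iff {b : G}
    (h4 : Nat.card {c : G // c ^ 2 = 1 ∧ ∃ b, c = b ^ 2} = 2) (hb : b ^ 2 ≠ 1)
    (hb4 : (b ^ 2) ^ 2 = 1) :
    Nat.card {c : G // c ^ 2 = 1 ∧ ∃ e, c = e ^ 4} = 1 ↔ ¬ ∃ e, b ^ 2 = e ^ 4 := by
  have hmem (c : G) (hc : c ^ 2 = 1) (hcsq : ∃ e, c = e ^ 2) : c = 1 ∨ c = b ^ 2 := by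
    obtain ⟨t, -, ht⟩ := (Nat.card_eq_two_iff' ⟨1, one_pow 2, 1, (one_pow 2).symm⟩).mp h4
    refine or_iff_not_imp_left.mpr fun hc1 => Subtype.ext_iff.mp <|
      (ht ⟨c, hc, hcsq⟩ fun h => hc1 (Subtype.ext_iff.mp h)).trans
        (ht ⟨b ^ 2, hb4, b, rfl⟩ fun h => hb (Subtype.ext_iff.mp h)).symm
  rw [Nat.card_eq_one_iff_exists]
  constructor
  · rintro ⟨a, ha⟩ hfourth
    exact hb (Subtype.ext_iff.mp
      ((ha ⟨b ^ 2, hb4, hfourth⟩).trans (ha ⟨1, one_pow 2, 1, (one_pow 4).symm⟩).symm))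
  · refine fun hfourth => ⟨⟨1, one_pow 2, 1, (one_pow 4).symm⟩, ?_⟩
    rintro ⟨c, hc, e, rfl⟩
    rcases hmem _ hc ⟨e ^ 2, by rw [← pow_mul]⟩ with h | h
    · exact Subtype.ext h
    · exact absurd ⟨e, h.symm⟩ hfourth

theorem card_sq_eq_one_and_fourth_power_eq_one_iff_map_ne_one [Finite G] {M : Type*}
    [MulOneClass M] {χ : G →* M} (h4 : Nat.card {c : G // c ^ 2 = 1 ∧ ∃ b, c = b ^ 2} = 2)
    (hχ : ∃ c, χ c ≠ 1) (hχsq : ∀ c, χ (c ^ 2) = 1) (hχtors : ∀ c, c ^ 2 = 1 → χ c = 1)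
    {b : G} (hb : b ^ 2 ≠ 1) (hb4 : (b ^ 2) ^ 2 = 1) :
    Nat.card {c : G // c ^ 2 = 1 ∧ ∃ e, c = e ^ 4} = 1 ↔ χ b ≠ 1 := by
  rw [card_sq_eq_one_and_fourth_power_eq_one_iff h4 hb hb4,
    ← mem_range_sup_ker_powMonoidHom_two_iff,
    ← ker_eq_range_sup_ker_powMonoidHom_two h4 hχ hχsq hχtors, MonoidHom.mem_ker]

end FiniteGroup

section NormForm

theorem exists_prod_eq_sq_sub_mul_sq {ι : Type*} (S : Finset ι) (d : ℕ) {f X Y : ι → ℕ}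
    (h : ∀ i ∈ S, (f i : ℤ) = X i ^ 2 - d * Y i ^ 2) :
    ∃ U V : ℕ, ((∏ i ∈ S, f i : ℕ) : ℤ) = U ^ 2 - d * V ^ 2 ∧ U ≡ ∏ i ∈ S, X i [MOD d] := by
  induction S using Finset.cons_induction with
  | empty => exact ⟨1, 0, by simp, rfl⟩
  | cons i S hi ih =>
    obtain ⟨U, V, hUV, hU⟩ := ih fun j hj => h j (Finset.mem_cons_of_mem hj)
    refine ⟨X i * U + d * (Y i * V), X i * V + Y i * U, ?_, ?_⟩
    · rw [Finset.prod_cons, Nat.cast_mul, hUV, h i (Finset.mem_cons_self i S)]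
      push_cast; ring
    · rw [Finset.prod_cons]
      exact Nat.ModEq.trans (Nat.add_mul_mod_self_left _ _ _) (hU.mul_left _)

theorem χ₄_prod_eq_neg_one_pow {ι : Type*} (S : Finset ι) {X : ι → ℕ} (hX : ∀ i ∈ S, Odd (X i)) :
    ZMod.χ₄ (∏ i ∈ S, X i : ℕ) = (-1) ^ ∑ i ∈ S, if X i % 4 = 3 then 1 else 0 := by
  rw [Nat.cast_prod, map_prod, ← Finset.prod_pow_eq_pow_sum]
  refine Finset.prod_congr rfl fun i hi => ?_
  rcases Nat.odd_mod_four_iff.mp (Nat.odd_iff.mp (hX i hi)) with h | h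
  · rw [ZMod.χ₄_nat_one_mod_four h, if_neg (by omega), pow_zero]
  · rw [ZMod.χ₄_nat_three_mod_four h, if_pos h, pow_one]

theorem odd_of_odd_eq_sq_sub_two_mul {f x : ℕ} {y : ℤ} (hf : Odd f)
    (h : (f : ℤ) = (x : ℤ) ^ 2 - 2 * y) : Odd x := by
  have hx : (x : ℤ) ^ 2 = f + 2 * y := by rw [h, sub_add_cancel]
  have hodd : Odd ((x : ℤ) ^ 2) := hx ▸ (Int.odd_coe_nat f |>.mpr hf).add_even (even_two_mul y)
  exact (Int.odd_coe_nat x).mp ((Int.odd_pow' two_ne_zero).mp hodd)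

theorem exists_prod_eq_sq_sub_thirtyTwo_mul_sq_and_χ₄_eq {ι : Type*} (S : Finset ι) {f X Y : ι → ℕ}
    (hf : ∀ i ∈ S, Odd (f i)) (h : ∀ i ∈ S, (f i : ℤ) = X i ^ 2 - 32 * Y i ^ 2) :
    ∃ U V : ℕ, ((∏ i ∈ S, f i : ℕ) : ℤ) = U ^ 2 - 32 * V ^ 2 ∧
      ZMod.χ₄ U = (-1) ^ ∑ i ∈ S, if X i % 4 = 3 then 1 else 0 := by
  obtain ⟨U, V, hUV, hU⟩ := exists_prod_eq_sq_sub_mul_sq S 32 h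
  refine ⟨U, V, hUV, ?_⟩
  rw [(ZMod.natCast_eq_natCast_iff _ _ _).mpr (hU.of_dvd (by norm_num : 4 ∣ 32))]
  exact χ₄_prod_eq_neg_one_pow S fun i hi =>
    odd_of_odd_eq_sq_sub_two_mul (y := 16 * Y i ^ 2) (hf i hi) (by rw [h i hi]; ring)

end NormForm

section ClassOfTwo
open scoped nonZeroDivisors

variable {n : ℕ}

theorem isPrincipalIdealRing_sqrtNegOrder_one : IsPrincipalIdealRing (SqrtNegOrder 1) := by
  let f : GaussianInt →+* SqrtNegOrder 1 :=
    Zsqrtd.lift ⟨(ω : SqrtNegOrder 1), by simp [omega_mul_omega_eq_neg_natCast]⟩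
  refine IsPrincipalIdealRing.of_surjective f fun z => ⟨⟨z.re, z.im⟩, ?_⟩
  ext <;> simp [f, Zsqrtd.lift]

variable [IsDedekindDomain (SqrtNegOrder n)]

theorem ne_one_of_nontrivial_classGroup [Nontrivial (ClassGroup (SqrtNegOrder n))] : n ≠ 1 := by
  rintro rfl
  have := isPrincipalIdealRing_sqrtNegOrder_one
  obtain ⟨c, hc⟩ := exists_ne (1 : ClassGroup (SqrtNegOrder 1))
  exact hc (Subsingleton.elim _ _)

theorem genusCharacter_sq (hn : n % 8 = 1) (c : ClassGroup (SqrtNegOrder n)) :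
    genusCharacter hn (c ^ 2) = 1 := by
  obtain ⟨I, rfl⟩ := ClassGroup.mk0_surjective c
  rw [map_pow, genusCharacter_mk0, ← map_pow]
  exact oddPartχ₄_sq (Ideal.absNorm_ne_zero_of_nonZeroDivisors I)

theorem exists_sq_ne_one_and_genusCharacter_eq (hn : n % 8 = 1) (hn1 : n ≠ 1) {U V : ℕ}
    (h : (n : ℤ) = U ^ 2 - 32 * V ^ 2) :
    ∃ b : ClassGroup (SqrtNegOrder n), b ^ 2 ≠ 1 ∧ (b ^ 2) ^ 2 = 1 ∧
      genusCharacter hn b = ZMod.χ₄ U := by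
  have hn4 : n % 4 = 1 := by omega
  have hU : Odd U := by
    by_contra hU
    obtain ⟨k, rfl⟩ := even_iff_two_dvd.mp (Nat.not_odd_iff_even.mp hU)
    push_cast at h; ring_nf at h; omega
  have hzodd : Odd (U + 4 * V) := hU.add_even ((by decide : Even 4).mul_right V)
  have hz0 : U + 4 * V ≠ 0 := by have := hzodd.pos; omega
  have hxz : ((U + 8 * V : ℕ) : ℤ) ^ 2 + n = 2 * ((U + 4 * V : ℕ) : ℤ) ^ 2 := by
    rw [h]; push_cast; ring
  have hx : Odd ((U + 8 * V : ℕ) : ℤ) := by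
    exact_mod_cast hU.add_even ((by decide : Even 8).mul_right V)
  have hT := mem_nonZeroDivisors_of_absNorm_eq (absNorm_pairIdeal_two_one hn4) two_ne_zero
  have hBnorm : Ideal.absNorm (pairIdeal n (U + 4 * V) (U + 8 * V : ℕ)) = U + 4 * V :=
    absNorm_pairIdeal ⟨2 * (U + 4 * V : ℕ), by rw [hxz]; ring⟩
  have hB := mem_nonZeroDivisors_of_absNorm_eq hBnorm hz0
  set t := ClassGroup.mk0 ⟨_, hT⟩
  set b := ClassGroup.mk0 ⟨_, hB⟩
  have ht : t ^ 2 = 1 := by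
    rw [← map_pow, ClassGroup.mk0_eq_one_iff]
    exact ⟨_, pairIdeal_two_one_sq hn4⟩
  have htb : t * b ^ 2 = 1 := by
    rw [← map_pow, ← map_mul, ClassGroup.mk0_eq_one_iff]
    exact ⟨_, pairIdeal_two_one_mul_sq hn4 hz0 hx hxz⟩
  have hbt : b ^ 2 = t := by
    rw [← mul_right_inj t, htb, ← sq, ht]
  refine ⟨b, ?_, by rw [hbt, ht], ?_⟩
  · rw [hbt, Ne, ClassGroup.mk0_eq_one_iff]
    exact not_isPrincipal_pairIdeal_two_one hn4 hn1
  · rw [genusCharacter_mk0, hBnorm, oddPartχ₄_of_odd hzodd, Nat.cast_add, Nat.cast_mul,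
      ZMod.natCast_self, zero_mul, add_zero]

theorem card_sq_eq_one_and_fourth_power_eq_one_iff_χ₄_ne_one [Finite (ClassGroup (SqrtNegOrder n))]
    (hn : n % 8 = 1) (hpn : ∀ p : ℕ, p.Prime → p ∣ n → p % 4 = 1) (hsf : Squarefree n)
    (h4 : Nat.card {c : ClassGroup (SqrtNegOrder n) // c ^ 2 = 1 ∧ ∃ b, c = b ^ 2} = 2)
    {U V : ℕ} (h : (n : ℤ) = U ^ 2 - 32 * V ^ 2) :
    Nat.card {c : ClassGroup (SqrtNegOrder n) // c ^ 2 = 1 ∧ ∃ b, c = b ^ 4} = 1 ↔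
      ZMod.χ₄ U ≠ 1 := by
  have : Nontrivial (ClassGroup (SqrtNegOrder n)) :=
    Finite.one_lt_card_iff_nontrivial.mp (h4.ge.trans (Finite.card_subtype_le _))
  have hn1 : n ≠ 1 := ne_one_of_nontrivial_classGroup
  obtain ⟨b, hb, hb4, hχb⟩ := exists_sq_ne_one_and_genusCharacter_eq hn hn1 h
  obtain ⟨c, hc⟩ := exists_genusCharacter_eq_neg_one hn hn1 hsf
  rw [← hχb]
  exact card_sq_eq_one_and_fourth_power_eq_one_iff_map_ne_one h4 ⟨c, by rw [hc]; decide⟩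
    (genusCharacter_sq hn)
    (fun c hc => genusCharacter_eq_one_of_sq_eq_one hn hpn hc) hb hb4

end ClassOfTwo

section Transport

theorem isDedekindDomain_of_ringEquiv {R S : Type*} [CommRing R] [IsDedekindDomain R] [CommRing S]
    (e : R ≃+* S) : IsDedekindDomain S := by
  have := e.symm.toMulEquiv.isDomain
  let := e.toRingHom.toAlgebra
  have := IsLocalization.self (M := (⊥ : Submonoid R)) (by simp)
  have := IsLocalization.isLocalization_of_algEquiv ⊥
    (AlgEquiv.ofRingEquiv (f := e) fun _ => rfl : R ≃ₐ[R] S)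
  exact IsLocalization.isDedekindDomain R bot_le S

theorem nonempty_sqrtNegOrder_ringEquiv_ringOfIntegers {n : ℕ} (hsf : Squarefree n)
    (hn : n % 4 ≠ 3) {K : Type*} [Field K] [NumberField K] (hdeg : Module.finrank ℚ K = 2) {s : K}
    (hs : s ^ 2 = -(n : K)) : Nonempty (SqrtNegOrder n ≃+* 𝓞 K) := by
  have hs' : s * s = (-n : ℤ) • (1 : K) + (0 : ℤ) • s := by
    rw [← sq, hs, zero_smul, add_zero, zsmul_one]; push_cast; rfl
  let := (QuadraticAlgebra.lift ⟨s, hs'⟩ : SqrtNegOrder n →ₐ[ℤ] K).toRingHom.toAlgebra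
  have hsf' : Squarefree (-n : ℤ) := by
    rwa [← Int.squarefree_natAbs, Int.natAbs_neg, Int.natAbs_natCast]
  have := isIntegralClosure_quadraticAlgebra hsf' (by omega) hdeg
  exact ⟨(IsIntegralClosure.equiv ℤ (SqrtNegOrder n) K (𝓞 K)).toRingEquiv⟩

theorem card_sq_eq_one_and_pow_congr {G H : Type*} [Monoid G] [Monoid H] (e : G ≃* H) (k : ℕ) :
    Nat.card {c : G // c ^ 2 = 1 ∧ ∃ b, c = b ^ k} =
      Nat.card {c : H // c ^ 2 = 1 ∧ ∃ b, c = b ^ k} :=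
  Nat.card_congr <| e.toEquiv.subtypeEquiv fun c => by
    simp [e.surjective.exists, ← map_pow]

end Transport

/-- for squarefree `n` with all prime factors `≡ 1 (mod 8)` and `h₄(n) = 1`
(the group `A[2] ∩ 2A` has order `2`), the sum `Σ_{p ∣ n} δ_p` is odd iff `h₈(n) = 0`
(the group `A[2] ∩ 4A` is trivial), where `δ_p = 1` iff `x_p ≡ 3 (mod 4)` for a
representation `p = x_p² − 32y_p²` in positive integers. -/
theorem stmt_16 (n : ℕ) (hnpos : 0 < n) (hnsf : Squarefree n)
    (hpf : ∀ q : ℕ, q.Prime → q ∣ n → q % 8 = 1)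
    (K : Type) [Field K] [NumberField K] (hdeg : Module.finrank ℚ K = 2)
    (s : K) (hs : s ^ 2 = -(n : K))
    (h4 : Nat.card {c : ClassGroup (𝓞 K) // c ^ 2 = 1 ∧ ∃ b, c = b ^ 2} = 2)
    (X Y : ℕ → ℕ)
    (hXY : ∀ q ∈ n.primeFactors, 0 < X q ∧ 0 < Y q ∧
      (q : ℤ) = (X q : ℤ) ^ 2 - 32 * (Y q : ℤ) ^ 2) :
    Odd (∑ q ∈ n.primeFactors, if X q % 4 = 3 then 1 else 0) ↔
      Nat.card {c : ClassGroup (𝓞 K) // c ^ 2 = 1 ∧ ∃ b, c = b ^ 4} = 1 := by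
  have hn8 : n % 8 = 1 := mod_eight_eq_one_of_forall_prime_dvd hnsf.ne_zero hpf
  have hpf4 : ∀ q : ℕ, q.Prime → q ∣ n → q % 4 = 1 := fun q hq hqn => by
    have := hpf q hq hqn; omega
  obtain ⟨e⟩ := nonempty_sqrtNegOrder_ringEquiv_ringOfIntegers hnsf (by omega) hdeg hs
  have : IsDedekindDomain (SqrtNegOrder n) := isDedekindDomain_of_ringEquiv e.symm
  have : Finite (ClassGroup (SqrtNegOrder n)) := .of_equiv _ (ClassGroup.mulEquiv e.symm).toEquiv
  have hodd : ∀ q ∈ n.primeFactors, Odd q := fun q hq =>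
    (Nat.odd_iff.mpr (by omega : n % 2 = 1)).of_dvd_nat (Nat.dvd_of_mem_primeFactors hq)
  obtain ⟨U, V, hUV, hχU⟩ :=
    exists_prod_eq_sq_sub_thirtyTwo_mul_sq_and_χ₄_eq n.primeFactors hodd fun q hq => (hXY q hq).2.2
  rw [Nat.prod_primeFactors_of_squarefree hnsf] at hUV
  rw [← card_sq_eq_one_and_pow_congr (ClassGroup.mulEquiv e)] at h4 ⊢
  rw [card_sq_eq_one_and_fourth_power_eq_one_iff_χ₄_ne_one hn8 hpf4 hnsf h4 hUV, hχU, Ne,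
    neg_one_pow_eq_one_iff_even (by decide), Nat.not_even_iff_odd]
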